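/- Let λ be a positive irrational real number with λ ≥ 3. Then there exists a C-linear map L : A → C² such that, writing L(I(q)) = (F₀(q), F₁(q)) for q > 0, for each k ∈ {0,1} and each integer M ≥ 0 there exist constants K_M, q_M with: for all real q ≥ q_M, | F_k(q) − Σ_{m=0}^{M−1} [∏_{l=0}^{m−1}(−λ−(k/2+l))³/(2m+k)!] · q^{−m−k/2−λ} | ≤ K_M · q^{−M−k/2−λ}. That is, L·I^{Tot(O_{P²}(−2))}(q, z=1) admits the power series asymptotic expansion I^{[C³/Z₂]}(t = q^{−1/2}, z = 1) = Σ_{k=0,1} Σ_{m≥0} q^{−m−k/2−λ} [∏_{l=0}^{m−1}(−λ−(k/2+l))³/(2m+k)!] · 1_k as q → +∞. -/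

import Mathlib

namespace Stmt8

open MeasureTheory Set Filter Topology

/-- sequences of successive derivatives, all of polynomial growth -/
def Good (g : ℕ → ℝ → ℝ) : Prop :=
  (∀ j x, HasDerivAt (g j) (g (j + 1) x) x) ∧
    ∀ j, ∃ C : ℝ, ∃ n : ℕ, 0 ≤ C ∧ ∀ x, |g j x| ≤ C * (1 + |x|) ^ n

noncomputable def wt (lam ρ : ℝ) : ℝ := ρ ^ (2 * lam - 1) * Real.exp (-ρ ^ 2)

noncomputable def KK (lam : ℝ) (g : ℕ → ℝ → ℝ) (j : ℕ) (τ : ℝ) : ℝ :=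
  ∫ ρ in Ioi (0 : ℝ), wt lam ρ * ρ ^ j * g j (τ * ρ)

noncomputable def NN (lam : ℝ) (g : ℕ → ℝ → ℝ) (j : ℕ) (x : ℝ) : ℝ :=
  (lam + j / 2) * g j x + x / 2 * g (j + 1) x

def SS (g : ℕ → ℝ → ℝ) (j : ℕ) (x : ℝ) : ℝ := g (j + 2) x

lemma wt_cont {lam : ℝ} (hl : 3 ≤ lam) : Continuous (wt lam) := by
  unfold wt
  have : Continuous fun ρ : ℝ => ρ ^ (2 * lam - 1) :=
    Real.continuous_rpow_const (by linarith)
  fun_prop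

lemma wt_nonneg {lam ρ : ℝ} (h : 0 < ρ) : 0 ≤ wt lam ρ := by
  unfold wt; positivity

lemma wt_pos {lam ρ : ℝ} (h : 0 < ρ) : 0 < wt lam ρ := by
  unfold wt; positivity

lemma int_pow {lam : ℝ} (hl : 3 ≤ lam) (j : ℕ) :
    IntegrableOn (fun ρ => wt lam ρ * ρ ^ j) (Ioi (0 : ℝ)) := by
  have h := integrableOn_rpow_mul_exp_neg_mul_sq (b := 1) one_pos
    (s := 2 * lam - 1 + j) (by have : (0:ℝ) ≤ j := Nat.cast_nonneg j
                               linarith)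
  refine h.congr_fun ?_ measurableSet_Ioi
  intro ρ hρ
  simp only [mem_Ioi] at hρ
  simp only [wt]
  rw [Real.rpow_add hρ, Real.rpow_natCast]
  ring_nf

lemma int_bd {lam : ℝ} (hl : 3 ≤ lam) (j n : ℕ) :
    IntegrableOn (fun ρ => wt lam ρ * ρ ^ j * (1 + ρ) ^ n) (Ioi (0 : ℝ)) := by
  have h1 := ((int_pow hl j).add (int_pow hl (j + n))).const_mul (2 ^ (n - 1))
  refine Integrable.mono' h1 ?_ ?_
  · have := wt_cont hl
    exact Continuous.aestronglyMeasurable (by fun_prop)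
  · refine (ae_restrict_iff' measurableSet_Ioi).2 (ae_of_all _ fun ρ hρ => ?_)
    simp only [mem_Ioi] at hρ
    have hw := wt_nonneg (lam := lam) hρ
    rw [Real.norm_of_nonneg (by positivity)]
    have := add_pow_le (zero_le_one (α := ℝ)) hρ.le n
    calc wt lam ρ * ρ ^ j * (1 + ρ) ^ n
        ≤ wt lam ρ * ρ ^ j * (2 ^ (n - 1) * (1 ^ n + ρ ^ n)) := by gcongr
      _ = _ := by simp only [Pi.add_apply]; ring

lemma bd_scale {h : ℝ → ℝ} {C : ℝ} {n : ℕ} (hC : 0 ≤ C)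
    (hb : ∀ x, |h x| ≤ C * (1 + |x|) ^ n) {τ R ρ : ℝ} (hτ : |τ| ≤ R) (hρ : 0 < ρ) :
    |h (τ * ρ)| ≤ C * (1 + R) ^ n * (1 + ρ) ^ n := by
  refine (hb _).trans ?_
  rw [mul_assoc, ← mul_pow, abs_mul, abs_of_pos hρ]
  have h0 : 0 ≤ |τ| := abs_nonneg _
  have h1 : |τ| * ρ ≤ R * ρ := by gcongr
  gcongr
  nlinarith

lemma int_h {lam : ℝ} (hl : 3 ≤ lam) {h : ℝ → ℝ} (hc : Continuous h) {C : ℝ} {n : ℕ}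
    (hC : 0 ≤ C) (hb : ∀ x, |h x| ≤ C * (1 + |x|) ^ n) (j : ℕ) (τ : ℝ) :
    IntegrableOn (fun ρ => wt lam ρ * ρ ^ j * h (τ * ρ)) (Ioi (0 : ℝ)) := by
  refine Integrable.mono' ((int_bd hl j n).const_mul (C * (1 + |τ|) ^ n)) ?_ ?_
  · have := wt_cont hl
    exact Continuous.aestronglyMeasurable (by fun_prop)
  · refine (ae_restrict_iff' measurableSet_Ioi).2 (ae_of_all _ fun ρ hρ => ?_)
    simp only [mem_Ioi] at hρ
    have hw := wt_nonneg (lam := lam) hρ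
    rw [norm_mul, Real.norm_of_nonneg (by positivity), Real.norm_eq_abs]
    calc _ ≤ wt lam ρ * ρ ^ j * (C * (1 + |τ|) ^ n * (1 + ρ) ^ n) := by
          gcongr; exact bd_scale hC hb le_rfl hρ
      _ = _ := by ring

lemma Good.cont {g : ℕ → ℝ → ℝ} (hg : Good g) (j : ℕ) : Continuous (g j) :=
  continuous_iff_continuousAt.2 fun x => (hg.1 j x).continuousAt

lemma Good.int {lam : ℝ} (hl : 3 ≤ lam) {g : ℕ → ℝ → ℝ} (hg : Good g) (i j : ℕ) (τ : ℝ) :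
    IntegrableOn (fun ρ => wt lam ρ * ρ ^ i * g j (τ * ρ)) (Ioi (0 : ℝ)) := by
  obtain ⟨C, n, hC, hb⟩ := hg.2 j
  exact int_h hl (hg.cont j) hC hb i τ

lemma Good.KK {lam : ℝ} (hl : 3 ≤ lam) {g : ℕ → ℝ → ℝ} (hg : Good g) : Good (KK lam g) := by
  constructor
  · intro j τ
    obtain ⟨C, n, hC, hb⟩ := hg.2 (j + 1)
    have hwc := wt_cont hl
    have hgc := hg.cont j
    have hgc' := hg.cont (j + 1)
    refine (hasDerivAt_integral_of_dominated_loc_of_deriv_le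
      (F := fun τ ρ => wt lam ρ * ρ ^ j * g j (τ * ρ))
      (F' := fun τ ρ => wt lam ρ * ρ ^ (j + 1) * g (j + 1) (τ * ρ))
      (bound := fun ρ => C * (1 + (|τ| + 1)) ^ n * (wt lam ρ * ρ ^ (j + 1) * (1 + ρ) ^ n))
      (Metric.ball_mem_nhds τ one_pos) ?_ ?_ ?_ ?_ ?_ ?_).2
    · exact Eventually.of_forall fun t => Continuous.aestronglyMeasurable (by fun_prop)
    · exact hg.int hl j j τ
    · exact Continuous.aestronglyMeasurable (by fun_prop)
    · refine (ae_restrict_iff' measurableSet_Ioi).2 (ae_of_all _ fun ρ hρ t ht => ?_)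
      simp only [mem_Ioi] at hρ
      have hw := wt_nonneg (lam := lam) hρ
      have ht' : |t| ≤ |τ| + 1 := by
        rw [Metric.mem_ball, Real.dist_eq] at ht
        have := abs_add_le τ (t - τ)
        rw [add_sub_cancel] at this
        linarith
      rw [norm_mul, Real.norm_of_nonneg (by positivity), Real.norm_eq_abs]
      calc _ ≤ wt lam ρ * ρ ^ (j + 1) * (C * (1 + (|τ| + 1)) ^ n * (1 + ρ) ^ n) := by
            gcongr; exact bd_scale hC hb ht' hρ
        _ = _ := by ring
    · exact (int_bd hl (j + 1) n).const_mul _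
    · refine ae_of_all _ fun ρ t _ => ?_
      have h1 := (hg.1 j (t * ρ)).comp t ((hasDerivAt_id t).mul_const ρ)
      have h2 := h1.const_mul (wt lam ρ * ρ ^ j)
      refine h2.congr_deriv ?_
      ring
  · intro j
    obtain ⟨C, n, hC, hb⟩ := hg.2 j
    refine ⟨C * ∫ ρ in Ioi (0 : ℝ), wt lam ρ * ρ ^ j * (1 + ρ) ^ n, n, ?_, ?_⟩
    · refine mul_nonneg hC (setIntegral_nonneg measurableSet_Ioi fun ρ hρ => ?_)
      simp only [mem_Ioi] at hρ
      have hw := wt_nonneg (lam := lam) hρ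
      positivity
    · intro τ
      have := norm_integral_le_of_norm_le
        (μ := volume.restrict (Ioi (0:ℝ))) (f := fun ρ => wt lam ρ * ρ ^ j * g j (τ * ρ))
        ((int_bd hl j n).const_mul (C * (1 + |τ|) ^ n)) (by
          refine (ae_restrict_iff' measurableSet_Ioi).2 (ae_of_all _ fun ρ hρ => ?_)
          simp only [mem_Ioi] at hρ
          have hw := wt_nonneg (lam := lam) hρ
          rw [norm_mul, Real.norm_of_nonneg (by positivity), Real.norm_eq_abs]
          calc _ ≤ wt lam ρ * ρ ^ j * (C * (1 + |τ|) ^ n * (1 + ρ) ^ n) := by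
                gcongr; exact bd_scale hC hb le_rfl hρ
            _ = _ := by ring)
      rw [integral_const_mul] at this
      calc _ ≤ _ := this
        _ = _ := by ring

lemma Good.SS {g : ℕ → ℝ → ℝ} (hg : Good g) : Good (SS g) :=
  ⟨fun j x => hg.1 (j + 2) x, fun j => hg.2 (j + 2)⟩

lemma Good.NN (lam : ℝ) {g : ℕ → ℝ → ℝ} (hg : Good g) : Good (NN lam g) := by
  constructor
  · intro j x
    have h := ((hg.1 j x).const_mul (lam + j / 2)).add
      (((hasDerivAt_id x).div_const 2).mul (hg.1 (j + 1) x))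
    refine h.congr_deriv ?_
    simp only [Stmt8.NN, id]
    push_cast
    ring
  · intro j
    obtain ⟨C, n, hC, hb⟩ := hg.2 j
    obtain ⟨C', n', hC', hb'⟩ := hg.2 (j + 1)
    refine ⟨|lam + j / 2| * C + C', n + n' + 1, by positivity, fun x => ?_⟩
    have h0 : 0 ≤ |x| := abs_nonneg _
    have h1 : (1 : ℝ) ≤ 1 + |x| := by linarith
    have e1 : (1 + |x|) ^ n ≤ (1 + |x|) ^ (n + n' + 1) := pow_le_pow_right₀ h1 (by omega)
    have e2 : (1 + |x|) ^ (n' + 1) ≤ (1 + |x|) ^ (n + n' + 1) := pow_le_pow_right₀ h1 (by omega)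
    have e3 : |x / 2| ≤ 1 + |x| := by rw [abs_div, abs_two]; linarith
    unfold Stmt8.NN
    calc |(lam + j / 2) * g j x + x / 2 * g (j + 1) x|
        ≤ |lam + j / 2| * |g j x| + |x / 2| * |g (j + 1) x| := by
          rw [← abs_mul, ← abs_mul]; exact abs_add_le _ _
      _ ≤ |lam + j / 2| * (C * (1 + |x|) ^ n) + (1 + |x|) * (C' * (1 + |x|) ^ n') := by
          gcongr
          · exact hb x
          · exact hb' x
      _ = |lam + j / 2| * C * (1 + |x|) ^ n + C' * (1 + |x|) ^ (n' + 1) := by ring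
      _ ≤ |lam + j / 2| * C * (1 + |x|) ^ (n + n' + 1) + C' * (1 + |x|) ^ (n + n' + 1) := by
          gcongr
      _ = _ := by ring

lemma byparts {lam : ℝ} (hl : 3 ≤ lam) {g : ℕ → ℝ → ℝ} (hg : Good g) (i j : ℕ) (τ : ℝ) :
    ∫ ρ in Ioi (0 : ℝ), wt lam ρ * ρ ^ (j + 2) * g i (τ * ρ) =
      (lam + j / 2) * (∫ ρ in Ioi (0 : ℝ), wt lam ρ * ρ ^ j * g i (τ * ρ)) +
      τ / 2 * ∫ ρ in Ioi (0 : ℝ), wt lam ρ * ρ ^ (j + 1) * g (i + 1) (τ * ρ) := by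
  have i1 := (hg.int hl j i τ).const_mul (2 * lam + j)
  have i2 := (hg.int hl (j + 2) i τ).const_mul 2
  have i3 := (hg.int hl (j + 1) (i + 1) τ).const_mul τ
  have hd : ∀ ρ ∈ Ioi (0 : ℝ), HasDerivAt (fun ρ => wt lam ρ * ρ ^ (j + 1) * g i (τ * ρ))
      ((2 * lam + j) * (wt lam ρ * ρ ^ j * g i (τ * ρ))
        - 2 * (wt lam ρ * ρ ^ (j + 2) * g i (τ * ρ))
        + τ * (wt lam ρ * ρ ^ (j + 1) * g (i + 1) (τ * ρ))) ρ := by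
    intro ρ hρ
    simp only [mem_Ioi] at hρ
    have a1 := Real.hasDerivAt_rpow_const (x := ρ) (p := 2 * lam - 1) (Or.inl hρ.ne')
    have a2 : HasDerivAt (fun ρ : ℝ => Real.exp (-ρ ^ 2)) (Real.exp (-ρ ^ 2) * (-(2 * ρ))) ρ := by
      have := ((hasDerivAt_pow 2 ρ).neg).exp
      simpa using this
    have a3 := hasDerivAt_pow (j + 1) ρ
    have a4 := (hg.1 i (τ * ρ)).comp ρ ((hasDerivAt_id ρ).const_mul τ)
    have h := ((a1.mul a2).mul a3).mul a4
    refine h.congr_deriv ?_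
    simp only [wt, Function.comp, id]
    have e : ρ ^ (2 * lam - 1) = ρ ^ (2 * lam - 1 - 1) * ρ := by
      rw [← Real.rpow_add_one hρ.ne']; ring_nf
    simp only [Pi.mul_apply, Nat.add_sub_cancel, id, Function.comp]
    rw [e]
    push_cast
    ring
  have i12 : Integrable (fun ρ => (2 * lam + j) * (wt lam ρ * ρ ^ j * g i (τ * ρ))
        - 2 * (wt lam ρ * ρ ^ (j + 2) * g i (τ * ρ))) (volume.restrict (Ioi 0)) := i1.sub i2
  have hIntg := i12.add i3
  have ht := tendsto_zero_of_hasDerivAt_of_integrableOn_Ioi hd hIntg (hg.int hl (j + 1) i τ)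
  have hwc := wt_cont hl
  have hgc := hg.cont i
  have hz := integral_Ioi_of_hasDerivAt_of_tendsto
    (Continuous.continuousWithinAt (by fun_prop)) hd hIntg ht
  rw [integral_add i12 i3, integral_sub i1 i2, integral_const_mul, integral_const_mul,
    integral_const_mul] at hz
  simp only [ne_eq, Nat.add_eq_zero_iff, one_ne_zero, and_false, not_false_eq_true, zero_pow,
    mul_zero, zero_mul, sub_zero] at hz
  linarith

lemma KN {lam : ℝ} (hl : 3 ≤ lam) {g : ℕ → ℝ → ℝ} (hg : Good g) :
    KK lam (NN lam g) = NN lam (KK lam g) := by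
  funext j τ
  unfold KK NN
  rw [← integral_const_mul, ← integral_const_mul, ← integral_add
    ((hg.int hl j j τ).const_mul _) ((hg.int hl (j + 1) (j + 1) τ).const_mul _)]
  congr 1
  funext ρ
  ring

lemma SK {lam : ℝ} (hl : 3 ≤ lam) {g : ℕ → ℝ → ℝ} (hg : Good g) :
    SS (KK lam g) = NN lam (KK lam (SS g)) := by
  funext j τ
  exact byparts hl hg (j + 2) j τ

lemma main_rel {lam : ℝ} (hl : 3 ≤ lam) {g : ℕ → ℝ → ℝ} (hg : Good g) :
    SS (KK lam (KK lam (KK lam g))) =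
      NN lam (NN lam (NN lam (KK lam (KK lam (KK lam (SS g)))))) := by
  have hs := hg.SS
  rw [SK hl ((hg.KK hl).KK hl), SK hl (hg.KK hl), SK hl hg, KN hl (hs.KK hl),
    KN hl (((hs.KK hl).KK hl).NN lam), KN hl ((hs.KK hl).KK hl)]

/-- trigonometric seed -/
noncomputable def tr (k j : ℕ) (x : ℝ) : ℝ := Real.cos (x + ((j : ℝ) - k) * (Real.pi / 2))

lemma tr_good (k : ℕ) : Good (tr k) := by
  constructor
  · intro j x
    have h := ((hasDerivAt_id x).add_const (((j : ℝ) - k) * (Real.pi / 2))).cos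
    refine h.congr_deriv ?_
    simp only [tr, id]
    have : x + (((j + 1 : ℕ) : ℝ) - k) * (Real.pi / 2)
      = (x + ((j : ℝ) - k) * (Real.pi / 2)) + Real.pi / 2 := by push_cast; ring
    rw [this, Real.cos_add_pi_div_two]
    ring
  · intro j
    exact ⟨1, 0, zero_le_one, fun x => by simpa [tr] using Real.abs_cos_le_one _⟩

lemma tr_succ2 (k j : ℕ) (x : ℝ) : tr k (j + 2) x = - tr k j x := by
  unfold tr
  have : x + (((j + 2 : ℕ) : ℝ) - k) * (Real.pi / 2)
      = (x + ((j : ℝ) - k) * (Real.pi / 2)) + Real.pi := by push_cast; ring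
  rw [this, Real.cos_add_pi]

noncomputable def Ph (lam : ℝ) (k : ℕ) : ℕ → ℝ → ℝ := KK lam (KK lam (KK lam (tr k)))

lemma Ph_good {lam : ℝ} (hl : 3 ≤ lam) (k : ℕ) : Good (Ph lam k) :=
  (((tr_good k).KK hl).KK hl).KK hl

lemma KK_neg (lam : ℝ) (g : ℕ → ℝ → ℝ) : KK lam (fun j x => - g j x) = fun j x => - KK lam g j x := by
  funext j τ
  simp only [KK, mul_neg, integral_neg]

lemma NN_neg (lam : ℝ) (g : ℕ → ℝ → ℝ) : NN lam (fun j x => - g j x) = fun j x => - NN lam g j x := by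
  funext j τ
  simp only [NN]; ring

lemma Ph_rel {lam : ℝ} (hl : 3 ≤ lam) (k : ℕ) (x : ℝ) :
    NN lam (NN lam (NN lam (Ph lam k))) 0 x = - Ph lam k 2 x := by
  have h := main_rel hl (tr_good k)
  have e : SS (tr k) = fun j x => - tr k j x := by
    funext j x; exact tr_succ2 k j x
  rw [e, KK_neg, KK_neg, KK_neg, NN_neg, NN_neg, NN_neg] at h
  have := congrFun (congrFun h 0) x
  simp only [SS, zero_add] at this
  unfold Ph
  linarith

noncomputable def gam (lam : ℝ) (j : ℕ) : ℝ := ∫ ρ in Ioi (0 : ℝ), wt lam ρ * ρ ^ j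

lemma gam_pos {lam : ℝ} (hl : 3 ≤ lam) (j : ℕ) : 0 < gam lam j := by
  unfold gam
  rw [setIntegral_pos_iff_support_of_nonneg_ae _ (int_pow hl j)]
  · have : Ioi (0:ℝ) ⊆ (Function.support fun ρ => wt lam ρ * ρ ^ j) ∩ Ioi 0 := by
      intro ρ hρ
      refine ⟨?_, hρ⟩
      simp only [mem_Ioi] at hρ
      have := wt_pos (lam := lam) hρ
      simp only [Function.mem_support]
      positivity
    refine lt_of_lt_of_le ?_ (measure_mono this)
    simp
  · refine (ae_restrict_iff' measurableSet_Ioi).2 (ae_of_all _ fun ρ hρ => ?_)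
    simp only [mem_Ioi] at hρ
    have hw := wt_nonneg (lam := lam) hρ
    simp only [Pi.zero_apply]
    positivity

lemma gam_rec {lam : ℝ} (hl : 3 ≤ lam) (j : ℕ) : gam lam (j + 2) = (lam + j / 2) * gam lam j := by
  have hg : Good (fun j _ => if j = 0 then 1 else 0) := by
    constructor
    · intro j x
      simpa using hasDerivAt_const x (if j = 0 then (1:ℝ) else 0)
    · intro j
      refine ⟨1, 0, zero_le_one, fun x => ?_⟩
      by_cases hj : j = 0 <;> simp [hj]
  have := byparts hl hg 0 j 0
  simpa [gam] using this

lemma gam_prod {lam : ℝ} (hl : 3 ≤ lam) (k m : ℕ) : gam lam (2 * m + k) =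
    (∏ l ∈ Finset.range m, (lam + ((k : ℝ) / 2 + l))) * gam lam k := by
  induction m with
  | zero => simp
  | succ m ih =>
    rw [show 2 * (m + 1) + k = (2 * m + k) + 2 by ring, gam_rec hl, ih, Finset.prod_range_succ]
    push_cast
    ring

lemma KK_zero (lam : ℝ) (g : ℕ → ℝ → ℝ) (j : ℕ) : KK lam g j 0 = gam lam j * g j 0 := by
  simp only [KK, zero_mul, gam, integral_mul_const]

lemma Ph_zero (lam : ℝ) (k j : ℕ) : Ph lam k j 0 = gam lam j ^ 3 * tr k j 0 := by
  simp only [Ph, KK_zero]; ring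

lemma tr_even (k m : ℕ) : tr k (2 * m + k) 0 = (-1) ^ m := by
  unfold tr
  have : (0:ℝ) + (((2 * m + k : ℕ) : ℝ) - k) * (Real.pi / 2) = m * Real.pi := by push_cast; ring
  rw [this, Real.cos_nat_mul_pi]

lemma tr_odd (k m : ℕ) : tr k (2 * m + k + 1) 0 = 0 := by
  unfold tr
  have : (0:ℝ) + (((2 * m + k + 1 : ℕ) : ℝ) - k) * (Real.pi / 2) = m * Real.pi + Real.pi / 2 := by
    push_cast; ring
  rw [this, Real.cos_add_pi_div_two, Real.sin_nat_mul_pi, neg_zero]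

lemma taylor (n : ℕ) : ∀ (g : ℕ → ℝ → ℝ) (_ : ∀ j x, HasDerivAt (g j) (g (j + 1) x) x) (C : ℝ)
    (_ : ∀ x ∈ Icc (0:ℝ) 1, |g n x| ≤ C), ∀ x ∈ Icc (0:ℝ) 1,
    |g 0 x - ∑ j ∈ Finset.range n, g j 0 * x ^ j / j.factorial| ≤ C * x ^ n := by
  induction n with
  | zero => intro g _ C hC x hx; simpa using hC x hx
  | succ n ih =>
    intro g hg C hC x hx
    have key := ih (fun j => g (j + 1)) (fun j => hg (j + 1)) C hC
    have hd : ∀ y : ℝ, HasDerivAt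
        (fun x => g 0 x - ∑ j ∈ Finset.range (n + 1), g j 0 * x ^ j / j.factorial)
        (g 1 y - ∑ j ∈ Finset.range n, g (j + 1) 0 * y ^ j / j.factorial) y := by
      intro y
      refine (hg 0 y).sub ?_
      have : ∀ j ∈ Finset.range (n + 1), HasDerivAt (fun x : ℝ => g j 0 * x ^ j / j.factorial)
          (g j 0 * (j * y ^ (j - 1)) / j.factorial) y := fun j _ =>
        ((hasDerivAt_pow j y).const_mul _).div_const _
      have h := HasDerivAt.fun_sum this
      convert h using 1
      rw [Finset.sum_range_succ']
      simp only [Nat.cast_zero, zero_mul, mul_zero, zero_div, add_zero, Nat.add_sub_cancel]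
      refine Finset.sum_congr rfl fun j _ => ?_
      rw [Nat.factorial_succ]
      have : (j.factorial : ℝ) ≠ 0 := by positivity
      push_cast
      field_simp
    have hC0 : 0 ≤ C := (abs_nonneg _).trans (hC 0 (by simp))
    have hmv := (convex_Icc (0:ℝ) x).norm_image_sub_le_of_norm_hasDerivWithin_le
      (C := C * x ^ n) (fun y _ => (hd y).hasDerivWithinAt) (fun y hy => by
        rw [Real.norm_eq_abs]
        refine (key y ⟨hy.1, hy.2.trans hx.2⟩).trans ?_
        have := hy.1
        have := hy.2
        gcongr) (left_mem_Icc.2 hx.1) (right_mem_Icc.2 hx.1)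
    have z : g 0 0 - ∑ j ∈ Finset.range (n + 1), g j 0 * (0:ℝ) ^ j / j.factorial = 0 := by
      rw [Finset.sum_range_succ']; simp
    simp only [z, sub_zero, Real.norm_eq_abs] at hmv
    rw [abs_of_nonneg hx.1] at hmv
    rw [pow_succ, ← mul_assoc]
    exact hmv

lemma sum_parity (k : Fin 2) (a : ℕ → ℝ) (h0 : k.val = 1 → a 0 = 0)
    (h : ∀ m, a (2 * m + k.val + 1) = 0) (M : ℕ) :
    ∑ j ∈ Finset.range (2 * M + k.val), a j = ∑ m ∈ Finset.range M, a (2 * m + k.val) := by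
  induction M with
  | zero =>
    fin_cases k
    · simp
    · simpa using h0 rfl
  | succ M ih =>
    rw [show 2 * (M + 1) + k.val = 2 * M + k.val + 1 + 1 by ring, Finset.sum_range_succ,
      Finset.sum_range_succ, ih, h, add_zero, Finset.sum_range_succ]

/-- Asymptotic expansion of `Ph` at `0`. -/
lemma Ph_asymp {lam : ℝ} (hl : 3 ≤ lam) (k : Fin 2) (M : ℕ) : ∃ C, ∀ t ∈ Icc (0:ℝ) 1,
    |(gam lam k.val ^ 3)⁻¹ * Ph lam k.val 0 t - ∑ m ∈ Finset.range M,
      (∏ l ∈ Finset.range m, (-lam - ((k.val : ℝ) / 2 + (l : ℝ))) ^ 3) /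
              ((2 * m + k.val).factorial : ℝ) * t ^ (2 * m + k.val)| ≤ C * t ^ (2 * M + k.val) := by
  have hg := Ph_good hl k.val
  obtain ⟨C, n, hC, hb⟩ := hg.2 (2 * M + k.val)
  have hp := gam_pos hl k.val
  refine ⟨(gam lam k.val ^ 3)⁻¹ * (C * 2 ^ n), fun t ht => ?_⟩
  have hT := taylor (2 * M + k.val) _ hg.1 (C * 2 ^ n) (fun x hx => (hb x).trans (by
    rw [abs_of_nonneg hx.1]
    have := hx.1
    have := hx.2
    gcongr
    linarith)) t ht
  rw [sum_parity k (fun j => Ph lam k.val j 0 * t ^ j / j.factorial)] at hT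
  · have e : (gam lam k.val ^ 3)⁻¹ * Ph lam k.val 0 t - ∑ m ∈ Finset.range M,
      (∏ l ∈ Finset.range m, (-lam - ((k.val : ℝ) / 2 + (l : ℝ))) ^ 3) /
              ((2 * m + k.val).factorial : ℝ) * t ^ (2 * m + k.val)
      = (gam lam k.val ^ 3)⁻¹ * (Ph lam k.val 0 t - ∑ m ∈ Finset.range M,
        Ph lam k.val (2 * m + k.val) 0 * t ^ (2 * m + k.val) / (2 * m + k.val).factorial) := by
      rw [mul_sub, Finset.mul_sum]
      congr 1
      refine Finset.sum_congr rfl fun m _ => ?_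
      rw [Ph_zero, tr_even, gam_prod hl]
      have e1 : ∏ l ∈ Finset.range m, (-lam - ((k.val : ℝ) / 2 + (l : ℝ))) ^ 3
          = (-1) ^ m * (∏ l ∈ Finset.range m, (lam + ((k.val : ℝ) / 2 + l))) ^ 3 := by
        rw [← Finset.prod_pow]
        conv_rhs => rw [← Finset.card_range m, ← Finset.prod_const, Finset.card_range,
          ← Finset.prod_mul_distrib]
        exact Finset.prod_congr rfl fun l _ => by ring
      rw [e1]
      field_simp
    rw [e, abs_mul, abs_of_pos (by positivity), mul_assoc]
    gcongr
  · intro h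
    have : tr k.val 0 0 = 0 := by simp [tr, h]
    simp [Ph_zero, this]
  · intro m
    simp [Ph_zero, tr_odd]

/-- the recessive solutions in the variable `x = log q` -/
noncomputable def FF (lam : ℝ) (g : ℕ → ℝ → ℝ) (x : ℝ) : ℝ :=
  Real.exp (-lam * x) * g 0 (Real.exp (-x / 2))

lemma FF_deriv (lam : ℝ) {g : ℕ → ℝ → ℝ} (hg : Good g) (x : ℝ) :
    HasDerivAt (FF lam g) (- FF lam (NN lam g) x) x := by
  have a1 := ((hasDerivAt_id x).const_mul (-lam)).exp
  have a2 := (((hasDerivAt_id x).neg).div_const 2).exp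
  have h := a1.mul ((hg.1 0 _).comp x a2)
  refine h.congr_deriv ?_
  simp only [FF, NN, id, Function.comp]
  push_cast
  simp only [Pi.neg_apply, id]
  ring

lemma FF_ode {lam : ℝ} (hl : 3 ≤ lam) (k : ℕ) (x : ℝ) :
    - FF lam (NN lam (NN lam (NN lam (Ph lam k)))) x = Real.exp x *
      (4 * FF lam (NN lam (NN lam (Ph lam k))) x + (8 * lam + 2) * (- FF lam (NN lam (Ph lam k)) x)
        + 2 * lam * (2 * lam + 1) * FF lam (Ph lam k) x) := by
  have hE : Real.exp x * (Real.exp (-x / 2) * Real.exp (-x / 2)) = 1 := by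
    rw [← Real.exp_add, ← Real.exp_add, ← Real.exp_zero]; congr 1; ring
  unfold FF
  rw [Ph_rel hl]
  simp only [NN]
  push_cast
  linear_combination (-(Real.exp (-lam * x) * Ph lam k 2 (Real.exp (-x / 2)))) * hE

section alg
variable {A : Type*} [NormedCommRing A] [NormedAlgebra ℂ A] [CompleteSpace A]

/-- factorially decaying sequences -/
def FS (v : ℕ → A) : Prop :=
  ∃ B C : ℝ, 0 ≤ B ∧ 0 ≤ C ∧ ∀ n, ‖v n‖ ≤ B * (C ^ n / n.factorial)

noncomputable def PP (v : ℕ → A) (x : ℝ) : A := ∑' n : ℕ, (Real.exp x) ^ n • v n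

noncomputable def WW (H : A) (v : ℕ → A) (x : ℝ) : A := NormedSpace.exp (x • H) * PP v x

def NH (H : A) (v : ℕ → A) (n : ℕ) : A := ((n : A) + H) * v n

lemma FS.mulN {v : ℕ → A} (hv : FS v) (H : A) : FS (NH H v) := by
  obtain ⟨B, C, hB, hC, h⟩ := hv
  refine ⟨B * (1 + ‖H‖), 2 * C, by positivity, by positivity, fun n => ?_⟩
  have h2 : (n : ℝ) + ‖H‖ ≤ (1 + ‖H‖) * 2 ^ n := by
    have a : (n : ℝ) ≤ 2 ^ n := by exact_mod_cast (Nat.lt_two_pow_self).le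
    have b : (1 : ℝ) ≤ 2 ^ n := one_le_pow₀ (by norm_num)
    have := norm_nonneg H
    nlinarith
  have h1 : ‖NH H v n‖ ≤ (n + ‖H‖) * ‖v n‖ := by
    unfold NH
    rw [add_mul, add_mul, ← nsmul_eq_mul]
    exact (norm_add_le _ _).trans (add_le_add (norm_nsmul_le) (norm_mul_le _ _))
  calc _ ≤ _ := h1
    _ ≤ ((1 + ‖H‖) * 2 ^ n) * (B * (C ^ n / n.factorial)) := by
        gcongr; exact h n
    _ = _ := by rw [mul_pow]; ring

lemma FS.natMul {v : ℕ → A} (hv : FS v) : FS (fun n => (n : ℝ) • v n) := by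
  have := hv.mulN 0
  convert this using 2 with n
  simp [NH, ← nsmul_eq_mul, Nat.cast_smul_eq_nsmul]

lemma FS.bound {v : ℕ → A} (hv : FS v) (r : ℝ) : ∃ b : ℕ → ℝ, Summable b ∧
    ∀ n, ∀ s : ℝ, |s| ≤ r → ‖s ^ n • v n‖ ≤ b n := by
  obtain ⟨B, C, hB, hC, h⟩ := hv
  refine ⟨fun n => B * ((r * C) ^ n / n.factorial),
    (Real.summable_pow_div_factorial _).mul_left _, fun n s hs => ?_⟩
  rw [norm_smul, norm_pow, Real.norm_eq_abs]
  have : 0 ≤ r := (abs_nonneg s).trans hs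
  calc _ ≤ r ^ n * (B * (C ^ n / n.factorial)) := by gcongr; exact h n
    _ = _ := by simp only [mul_pow]; ring

lemma FS.summable {v : ℕ → A} (hv : FS v) (s : ℝ) : Summable fun n => s ^ n • v n := by
  obtain ⟨b, hb, h⟩ := hv.bound |s|
  exact Summable.of_norm_bounded hb fun n => h n s le_rfl

lemma PP_deriv {v : ℕ → A} (hv : FS v) (x : ℝ) :
    HasDerivAt (PP v) (PP (fun n => (n : ℝ) • v n) x) x := by
  obtain ⟨b, hb, h⟩ := hv.natMul.bound (Real.exp (x + 1))
  refine hasDerivAt_tsum_of_isPreconnected (t := Iio (x + 1)) (y₀ := x)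
    (g := fun n x => (Real.exp x) ^ n • v n)
    (g' := fun n x => (Real.exp x) ^ n • ((n : ℝ) • v n)) hb isOpen_Iio isPreconnected_Iio
    ?_ ?_ (by simp) (hv.summable _) (by simp)
  · intro n y _
    have h1 := (((Real.hasDerivAt_exp y).pow n).smul_const (v n))
    refine h1.congr_deriv ?_
    rw [smul_smul]
    congr 1
    rcases n with _ | n
    · simp
    · simp only [Nat.add_sub_cancel, pow_succ]; ring
  · intro n y hy
    refine h n _ ?_
    rw [Real.abs_exp]
    exact Real.exp_le_exp.2 (le_of_lt hy)

lemma WW_deriv (H : A) {v : ℕ → A} (hv : FS v) (x : ℝ) :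
    HasDerivAt (WW H v) (WW H (NH H v) x) x := by
  have h1 := (hasDerivAt_exp_smul_const (𝕂 := ℝ) H x).mul (PP_deriv hv x)
  refine h1.congr_deriv ?_
  have e : PP (NH H v) x = H * PP v x + PP (fun n => (n : ℝ) • v n) x := by
    unfold PP
    rw [← (hv.summable (Real.exp x)).tsum_mul_left, ← Summable.tsum_add
      ((hv.summable (Real.exp x)).mul_left H) (hv.natMul.summable _)]
    congr 1
    funext n
    rw [mul_smul_comm, ← smul_add]
    congr 1
    rw [NH, Nat.cast_smul_eq_nsmul, nsmul_eq_mul]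
    ring
  unfold WW
  rw [e]
  ring

lemma PP_tendsto {v : ℕ → A} (hv : FS v) : Tendsto (PP v) atBot (𝓝 (v 0)) := by
  obtain ⟨b, hb, h⟩ := hv.bound 1
  have h1 : Tendsto (PP v) atBot (𝓝 (∑' n : ℕ, (0:ℝ) ^ n • v n)) := by
    refine tendsto_tsum_of_dominated_convergence hb ?_ ?_
    · intro n
      exact ((Real.tendsto_exp_atBot).pow n).smul_const _
    · filter_upwards [eventually_le_atBot 0] with x hx n
      refine h n _ ?_
      rw [Real.abs_exp]
      exact Real.exp_le_one_iff.2 hx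
  rw [tsum_eq_single 0 (by intro n hn; simp [hn])] at h1
  simpa using h1

lemma isUnit_H {H : A} (hH : H ^ 3 = 0) (n : ℕ) : IsUnit (H + ((n : A) + 1)) := by
  have h1 : IsUnit ((n : A) + 1) := by
    have : (n : A) + 1 = algebraMap ℂ A ((n : ℂ) + 1) := by simp
    rw [this]
    exact (IsUnit.mk0 _ (Nat.cast_add_one_ne_zero n)).map _
  rw [add_comm]
  exact IsNilpotent.isUnit_add_left_of_commute ⟨3, hH⟩ h1 (Commute.all _ _)

lemma u_rec {H : A} (hH : H ^ 3 = 0) (lam : ℝ) (u : ℕ → A)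
    (hu : ∀ n : ℕ, u n =
      (∏ l ∈ Finset.range (2 * n), (-2 * (H + algebraMap ℂ A (lam : ℂ)) - (l : A))) *
        Ring.inverse (∏ l ∈ Finset.range n, (H + ((l : A) + 1)) ^ 3)) (n : ℕ) :
    (H + ((n : A) + 1)) ^ 3 * u (n + 1) =
      (2 * (H + algebraMap ℂ A (lam : ℂ)) + 2 * n) *
        ((2 * (H + algebraMap ℂ A (lam : ℂ)) + 2 * n + 1) * u n) := by
  have hc := Ring.inverse_mul_cancel _ ((isUnit_H hH n).pow 3)
  rw [hu (n + 1), hu n, show 2 * (n + 1) = 2 * n + 1 + 1 by ring, Finset.prod_range_succ,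
    Finset.prod_range_succ, Finset.prod_range_succ _ n, Ring.mul_inverse_rev]
  push_cast
  generalize Ring.inverse ((H + ((n : A) + 1)) ^ 3) = a at *
  generalize Ring.inverse (∏ l ∈ Finset.range n, (H + ((l : A) + 1)) ^ 3) = b at *
  generalize ∏ l ∈ Finset.range (2 * n), (-2 * (H + algebraMap ℂ A (lam : ℂ)) - (l : A)) = p at *
  linear_combination ((2 * (H + algebraMap ℂ A (lam : ℂ)) + 2 * n) *
        ((2 * (H + algebraMap ℂ A (lam : ℂ)) + 2 * n + 1) * (p * b))) * hc

lemma inv_bound {H : A} (hH : H ^ 3 = 0) (n : ℕ) (y z : A) (h : (H + ((n : A) + 1)) * y = z) :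
    ‖y‖ ≤ (1 + ‖H‖ + ‖H ^ 2‖) / (n + 1) * ‖z‖ := by
  set c : ℝ := ((n : ℝ) + 1)⁻¹ with hc
  have hn : (0 : ℝ) < (n : ℝ) + 1 := by positivity
  have hc0 : 0 ≤ c := by positivity
  have hc1 : c ≤ 1 := inv_le_one_of_one_le₀ (by linarith [(Nat.cast_nonneg n : (0:ℝ) ≤ n)])
  have hca : algebraMap ℝ A c * ((n : A) + 1) = 1 := by
    have : (n : A) + 1 = algebraMap ℝ A ((n : ℝ) + 1) := by simp
    rw [this, ← map_mul, inv_mul_cancel₀ hn.ne', map_one]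
  have key : y = c • z - c ^ 2 • (H * z) + c ^ 3 • (H ^ 2 * z) := by
    simp only [Algebra.smul_def, map_pow]
    generalize algebraMap ℝ A c = a at *
    rw [← h]
    have e : (a - a ^ 2 * H + a ^ 3 * H ^ 2) * (H + ((n : A) + 1)) = 1 := by
      linear_combination (1 - a * H + a ^ 2 * H ^ 2) * hca + a ^ 3 * hH
    linear_combination (-y) * e
  have hn2 : ‖c ^ 2 • (H * z)‖ ≤ c * (‖H‖ * ‖z‖) := by
    rw [norm_smul, Real.norm_of_nonneg (by positivity)]
    gcongr
    · nlinarith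
    · exact norm_mul_le _ _
  have hn3 : ‖c ^ 3 • (H ^ 2 * z)‖ ≤ c * (‖H ^ 2‖ * ‖z‖) := by
    rw [norm_smul, Real.norm_of_nonneg (by positivity)]
    gcongr
    · exact pow_le_of_le_one hc0 hc1 (by norm_num)
    · exact norm_mul_le _ _
  have hn1 : ‖c • z‖ = c * ‖z‖ := by rw [norm_smul, Real.norm_of_nonneg hc0]
  rw [key] at *
  calc _ ≤ ‖c • z‖ + ‖c ^ 2 • (H * z)‖ + ‖c ^ 3 • (H ^ 2 * z)‖ :=
        (norm_add_le _ _).trans (add_le_add (norm_sub_le _ _) le_rfl)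
    _ ≤ c * ‖z‖ + c * (‖H‖ * ‖z‖) + c * (‖H ^ 2‖ * ‖z‖) := by rw [hn1]; gcongr
    _ = _ := by rw [div_eq_mul_inv, ← hc]; ring

lemma Q_bound (H : A) {lam : ℝ} (hl : 3 ≤ lam) (n : ℕ) (y : A) :
    ‖(2 * (H + algebraMap ℂ A (lam : ℂ)) + 2 * n) * y‖ ≤
      ((2 * ‖H‖ + 2 * lam + 3) * (n + 1)) * ‖y‖ ∧
    ‖(2 * (H + algebraMap ℂ A (lam : ℂ)) + 2 * n + 1) * y‖ ≤
      ((2 * ‖H‖ + 2 * lam + 3) * (n + 1)) * ‖y‖ := by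
  have gen : ∀ c : ℝ, 0 ≤ c → c ≤ 2 * lam + 2 * n + 1 → ‖(2 : ℝ) • (H * y) + c • y‖ ≤
      ((2 * ‖H‖ + 2 * lam + 3) * (n + 1)) * ‖y‖ := by
    intro c hc hc'
    calc _ ≤ 2 * (‖H‖ * ‖y‖) + c * ‖y‖ := by
          refine (norm_add_le _ _).trans ?_
          rw [norm_smul, norm_smul, Real.norm_of_nonneg hc, Real.norm_of_nonneg zero_le_two]
          gcongr
          exact norm_mul_le _ _
      _ = (2 * ‖H‖ + c) * ‖y‖ := by ring
      _ ≤ _ := by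
          gcongr
          have : (0:ℝ) ≤ n := Nat.cast_nonneg n
          have := norm_nonneg H
          nlinarith [mul_nonneg this (Nat.cast_nonneg (α := ℝ) n)]
  have hn : (0:ℝ) ≤ n := Nat.cast_nonneg n
  have ea : algebraMap ℂ A (lam : ℂ) = algebraMap ℝ A lam := by
    rw [IsScalarTower.algebraMap_apply ℝ ℂ A]; rfl
  constructor
  · convert gen (2 * lam + 2 * n) (by linarith) (by linarith) using 2
    simp only [Algebra.smul_def, map_add, map_mul, map_ofNat, map_natCast, ea]; ring
  · convert gen (2 * lam + 2 * n + 1) (by linarith) (by linarith) using 2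
    simp only [Algebra.smul_def, map_add, map_mul, map_ofNat, map_natCast, map_one, ea]; ring

lemma u_FS {H : A} (hH : H ^ 3 = 0) {lam : ℝ} (hl : 3 ≤ lam) (u : ℕ → A)
    (hr : ∀ n : ℕ, (H + ((n : A) + 1)) ^ 3 * u (n + 1) =
      (2 * (H + algebraMap ℂ A (lam : ℂ)) + 2 * n) *
        ((2 * (H + algebraMap ℂ A (lam : ℂ)) + 2 * n + 1) * u n)) : FS u := by
  set C := 1 + ‖H‖ + ‖H ^ 2‖ with hC
  set D := 2 * ‖H‖ + 2 * lam + 3 with hD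
  have hC0 : 0 ≤ C := by positivity
  have hD0 : 0 ≤ D := by positivity
  refine ⟨‖u 0‖, C ^ 3 * D ^ 2, norm_nonneg _, by positivity, fun n => ?_⟩
  induction n with
  | zero => simp
  | succ n ih =>
    have b1 := inv_bound hH n (u (n + 1)) _ rfl
    have b2 := inv_bound hH n ((H + ((n : A) + 1)) * u (n + 1)) _ rfl
    have b3 := inv_bound hH n ((H + ((n : A) + 1)) * ((H + ((n : A) + 1)) * u (n + 1))) _ rfl
    rw [show (H + ((n : A) + 1)) * ((H + ((n : A) + 1)) * ((H + ((n : A) + 1)) * u (n + 1)))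
      = (H + ((n : A) + 1)) ^ 3 * u (n + 1) by ring, hr n] at b3
    have b4 := (Q_bound H hl n ((2 * (H + algebraMap ℂ A (lam : ℂ)) + 2 * n + 1) * u n)).1
    have b5 := (Q_bound H hl n (u n)).2
    rw [← hC] at b1 b2 b3
    rw [← hD] at b4 b5
    have hn : (0 : ℝ) < (n : ℝ) + 1 := by positivity
    have hk : 0 ≤ C / ((n : ℝ) + 1) := by positivity
    calc ‖u (n + 1)‖ ≤ C / (n + 1) * (C / (n + 1) * (C / (n + 1) *
          ((D * (n + 1)) * ((D * (n + 1)) * (‖u 0‖ * ((C ^ 3 * D ^ 2) ^ n / n.factorial)))))) := by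
          refine b1.trans (mul_le_mul_of_nonneg_left (b2.trans (mul_le_mul_of_nonneg_left
            (b3.trans (mul_le_mul_of_nonneg_left (b4.trans (mul_le_mul_of_nonneg_left
            (b5.trans (mul_le_mul_of_nonneg_left ih ?_)) ?_)) hk)) hk)) hk) <;> positivity
      _ = _ := by
          rw [Nat.factorial_succ]
          push_cast
          field_simp
          ring

lemma WW_ode {H : A} (hH : H ^ 3 = 0) {lam : ℝ} (u : ℕ → A) (hF : FS u)
    (hr : ∀ n : ℕ, (H + ((n : A) + 1)) ^ 3 * u (n + 1) =
      (2 * (H + algebraMap ℂ A (lam : ℂ)) + 2 * n) *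
        ((2 * (H + algebraMap ℂ A (lam : ℂ)) + 2 * n + 1) * u n)) (x : ℝ) :
    WW H (NH H (NH H (NH H u))) x = Real.exp x • ((4 : ℝ) • WW H (NH H (NH H u)) x
      + (8 * lam + 2) • WW H (NH H u) x + (2 * lam * (2 * lam + 1)) • WW H u x) := by
  have h1 := hF.mulN H
  have h2 := h1.mulN H
  have h3 := h2.mulN H
  have ea : algebraMap ℂ A (lam : ℂ) = algebraMap ℝ A lam := by
    rw [IsScalarTower.algebraMap_apply ℝ ℂ A]; rfl
  have e : PP (NH H (NH H (NH H u))) x = Real.exp x • ((4 : ℝ) • PP (NH H (NH H u)) x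
      + (8 * lam + 2) • PP (NH H u) x + (2 * lam * (2 * lam + 1)) • PP u x) := by
    have s2 := (h2.summable (Real.exp x)).const_smul (4 : ℝ)
    have s1 := (h1.summable (Real.exp x)).const_smul (8 * lam + 2)
    have s0 := (hF.summable (Real.exp x)).const_smul (2 * lam * (2 * lam + 1))
    unfold PP
    rw [(h3.summable _).tsum_eq_zero_add, ← (h2.summable _).tsum_const_smul,
      ← (h1.summable _).tsum_const_smul, ← (hF.summable _).tsum_const_smul,
      ← s2.tsum_add s1, ← (s2.add s1).tsum_add s0, ← ((s2.add s1).add s0).tsum_const_smul]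
    have z : NH H (NH H (NH H u)) 0 = 0 := by
      simp only [NH, Nat.cast_zero, zero_add]
      linear_combination (u 0) * hH
    rw [z, smul_zero, zero_add]
    congr 1
    funext n
    have key : NH H (NH H (NH H u)) (n + 1) = (4 : ℝ) • NH H (NH H u) n
      + (8 * lam + 2) • NH H u n + (2 * lam * (2 * lam + 1)) • u n := by
      have := hr n
      simp only [NH, Algebra.smul_def, map_add, map_mul, map_ofNat, map_one]
      push_cast
      rw [ea] at this
      linear_combination this
    rw [key, smul_comm (4 : ℝ), smul_comm (8 * lam + 2), smul_comm (2 * lam * (2 * lam + 1)),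
      ← smul_add, ← smul_add, smul_smul, pow_succ, mul_comm (Real.exp x)]
  unfold WW
  rw [e]
  simp only [mul_smul_comm, mul_add]

lemma WW_indep {H : A} (hbasis : LinearIndependent ℂ ![1, H, H ^ 2])
    (u : ℕ → A) (hF : FS u) (hu0 : u 0 = 1) :
    ∃ x : ℝ, LinearIndependent ℂ ![WW H u x, WW H (NH H u) x, WW H (NH H (NH H u)) x] := by
  have t : Tendsto (fun x => ![PP u x, PP (NH H u) x, PP (NH H (NH H u)) x]) atBot
      (𝓝 ![1, H, H ^ 2]) := by
    rw [tendsto_pi_nhds]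
    intro i
    fin_cases i
    · simpa [hu0] using PP_tendsto hF
    · simpa [hu0, NH] using PP_tendsto (hF.mulN H)
    · simpa [hu0, NH, pow_two] using PP_tendsto ((hF.mulN H).mulN H)
  have ho := (isOpen_setOfPred_linearIndependent (𝕜 := ℂ) (E := A) (ι := Fin 3)).mem_nhds hbasis
  obtain ⟨x, hx⟩ := (t.eventually ho).exists
  refine ⟨x, ?_⟩
  have hx' : LinearIndependent ℂ ![PP u x, PP (NH H u) x, PP (NH H (NH H u)) x] := hx
  let _ : NormedAlgebra ℚ A := NormedAlgebra.restrictScalars ℚ ℂ A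
  have hU : IsUnit (NormedSpace.exp (x • H)) := NormedSpace.isUnit_exp _
  have hm := hx'.map' (LinearMap.mulLeft ℂ (NormedSpace.exp (x • H)))
    (LinearMap.ker_eq_bot.2 (hU.mul_right_injective))
  have e : ![WW H u x, WW H (NH H u) x, WW H (NH H (NH H u)) x] =
      (LinearMap.mulLeft ℂ (NormedSpace.exp (x • H))) ∘
        ![PP u x, PP (NH H u) x, PP (NH H (NH H u)) x] := by
    funext i
    fin_cases i <;> rfl
  rw [e]
  exact hm

lemma exists_functional {v : Fin 3 → A} (hv : LinearIndependent ℂ v) (c : Fin 3 → ℂ) :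
    ∃ f : A →L[ℂ] ℂ, ∀ i, f (v i) = c i := by
  let b := Module.Basis.span hv
  have : FiniteDimensional ℂ (Submodule.span ℂ (Set.range v)) := b.finiteDimensional_of_finite
  let f0 := b.constr ℂ c
  obtain ⟨g, hg, -⟩ := exists_extension_norm_eq _ (LinearMap.toContinuousLinearMap f0)
  refine ⟨g, fun i => ?_⟩
  have e : v i = (b i : A) := by simp [b, Module.Basis.span_apply]
  rw [e, hg]
  simp [f0]

end alg

lemma ode_unique (a b c : ℝ) (f0 f1 f2 g0 g1 g2 : ℝ → ℂ)
    (hf0 : ∀ x, HasDerivAt f0 (f1 x) x) (hf1 : ∀ x, HasDerivAt f1 (f2 x) x)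
    (hf2 : ∀ x, HasDerivAt f2 (Real.exp x • (a • f2 x + b • f1 x + c • f0 x)) x)
    (hg0 : ∀ x, HasDerivAt g0 (g1 x) x) (hg1 : ∀ x, HasDerivAt g1 (g2 x) x)
    (hg2 : ∀ x, HasDerivAt g2 (Real.exp x • (a • g2 x + b • g1 x + c • g0 x)) x)
    (x0 : ℝ) (h0 : f0 x0 = g0 x0) (h1 : f1 x0 = g1 x0) (h2 : f2 x0 = g2 x0) (x : ℝ) :
    f0 x = g0 x := by
  let B : ℂ × ℂ × ℂ →L[ℝ] ℂ × ℂ × ℂ :=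
    (((ContinuousLinearMap.fst ℝ ℂ ℂ).comp (ContinuousLinearMap.snd ℝ ℂ (ℂ × ℂ))).prod
      (((ContinuousLinearMap.snd ℝ ℂ ℂ).comp (ContinuousLinearMap.snd ℝ ℂ (ℂ × ℂ))).prod 0))
  let B' : ℂ × ℂ × ℂ →L[ℝ] ℂ × ℂ × ℂ :=
    ((0 : ℂ × ℂ × ℂ →L[ℝ] ℂ).prod ((0 : ℂ × ℂ × ℂ →L[ℝ] ℂ).prod
      (a • ((ContinuousLinearMap.snd ℝ ℂ ℂ).comp (ContinuousLinearMap.snd ℝ ℂ (ℂ × ℂ))) +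
       b • ((ContinuousLinearMap.fst ℝ ℂ ℂ).comp (ContinuousLinearMap.snd ℝ ℂ (ℂ × ℂ))) +
       c • (ContinuousLinearMap.fst ℝ ℂ (ℂ × ℂ)))))
  let v : ℝ → ℂ × ℂ × ℂ → ℂ × ℂ × ℂ := fun t y => (B + Real.exp t • B') y
  set R := |x| + |x0| + 1 with hR
  have hx : x ∈ Ioo (-R) R := by
    constructor <;> cases abs_cases x <;> cases abs_cases x0 <;> linarith
  have hx0 : x0 ∈ Ioo (-R) R := by
    constructor <;> cases abs_cases x <;> cases abs_cases x0 <;> linarith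
  have hlip : ∀ t ∈ Ioo (-R) R, LipschitzOnWith (‖B‖₊ + ⟨Real.exp R, (Real.exp_pos R).le⟩ * ‖B'‖₊)
      (v t) univ := by
    intro t ht
    refine ((B + Real.exp t • B').lipschitz.weaken ?_).lipschitzOnWith
    rw [← NNReal.coe_le_coe]
    push_cast
    refine (norm_add_le _ _).trans ?_
    rw [norm_smul, Real.norm_of_nonneg (Real.exp_pos t).le]
    have := Real.exp_le_exp.2 ht.2.le
    exact add_le_add le_rfl (mul_le_mul_of_nonneg_right this (norm_nonneg _))
  have := ODE_solution_unique_of_mem_Ioo (v := v) (s := fun _ => univ)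
    (f := fun t => (f0 t, f1 t, f2 t)) (g := fun t => (g0 t, g1 t, g2 t)) hlip hx0
    (fun t _ => ⟨by
      have := (hf0 t).prodMk ((hf1 t).prodMk (hf2 t))
      refine this.congr_deriv ?_
      simp [v, B, B'], mem_univ _⟩)
    (fun t _ => ⟨by
      have := (hg0 t).prodMk ((hg1 t).prodMk (hg2 t))
      refine this.congr_deriv ?_
      simp [v, B, B'], mem_univ _⟩) (by simp [h0, h1, h2]) hx
  exact congrArg Prod.fst this

end Stmt8

open Stmt8

/-- the main claim of the paper's example, Equation (2.1).  Let `λ ≥ 3` be a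
positive irrational real.  With `A = ℂ[X]/(X³)` (formalized as a complete normed commutative
`ℂ`-algebra with `H³ = 0` and `1, H, H²` linearly independent) and
`I(q) = exp(H·log q)·Σ_{n≥0} qⁿ [∏_{l=0}^{2n−1}(−2(H+λ)−l)]·[∏_{l=1}^{n}(H+l)³]⁻¹` the
`I`-function of `Tot(O_{ℙ²}(−2))` at `z = 1`, there is a `ℂ`-linear map `L : A → ℂ²` such
that each component `F_k(q)` of `L(I(q))` admits the power series asymptotic expansion
`Σ_{m≥0} [∏_{l=0}^{m−1}(−λ−(k/2+l))³/(2m+k)!]·q^{−m−k/2−λ}` as `q → +∞`; i.e.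
`L·I^{Tot(O_{ℙ²}(−2))}(q, z=1) ∼ I^{[ℂ³/ℤ₂]}(t = q^{−1/2}, z = 1)`. -/
theorem stmt_8 {A : Type*} [NormedCommRing A] [NormedAlgebra ℂ A] [CompleteSpace A]
    (H : A) (hH : H ^ 3 = 0) (hbasis : LinearIndependent ℂ ![1, H, H ^ 2])
    (lam : ℝ) (hpos : 0 < lam) (hirr : Irrational lam) (hlam : 3 ≤ lam)
    (u : ℕ → A)
    (hu : ∀ n : ℕ, u n =
      (∏ l ∈ Finset.range (2 * n), (-2 * (H + algebraMap ℂ A (lam : ℂ)) - (l : A))) *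
        Ring.inverse (∏ l ∈ Finset.range n, (H + ((l : A) + 1)) ^ 3))
    (I : ℝ → A)
    (hI : ∀ q : ℝ, 0 < q →
      I q = NormedSpace.exp (((Real.log q : ℝ) : ℂ) • H) * ∑' n : ℕ, ((q : ℂ) ^ n) • u n) :
    ∃ L : A →ₗ[ℂ] (Fin 2 → ℂ), ∀ k : Fin 2, ∀ M : ℕ, ∃ K q₀ : ℝ, ∀ q : ℝ, q₀ ≤ q →
      ‖L (I q) k - ∑ m ∈ Finset.range M,
          (((∏ l ∈ Finset.range m, (-lam - ((k.val : ℝ) / 2 + (l : ℝ))) ^ 3) /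
              ((2 * m + k.val).factorial : ℝ) : ℝ) : ℂ) *
            (q : ℂ) ^ (-((m : ℂ) + (k.val : ℂ) / 2 + (lam : ℂ)))‖
        ≤ K * q ^ (-((M : ℝ) + (k.val : ℝ) / 2 + lam)) := by
  
  have hr := u_rec hH lam u hu
  have hF := u_FS hH hlam u hr
  have hu0 : u 0 = 1 := by rw [hu 0]; simp
  obtain ⟨x0, hx0⟩ := WW_indep hbasis u hF hu0
  have hsol : ∀ k : Fin 2, ∃ f : A →L[ℂ] ℂ, ∀ x : ℝ, f (WW H u x) =
      (((gam lam k.val ^ 3)⁻¹ * FF lam (Ph lam k.val) x : ℝ) : ℂ) := by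
    intro k
    set κ : ℝ := (gam lam k.val ^ 3)⁻¹ with hκ
    have hg := Ph_good hlam k.val
    have hg1 := hg.NN lam
    have hg2 := hg1.NN lam
    obtain ⟨f, hf⟩ := exists_functional hx0 ![((κ * FF lam (Ph lam k.val) x0 : ℝ) : ℂ),
      ((κ * - FF lam (NN lam (Ph lam k.val)) x0 : ℝ) : ℂ),
      ((κ * FF lam (NN lam (NN lam (Ph lam k.val))) x0 : ℝ) : ℂ)]
    have i0 := hf 0
    have i1 := hf 1
    have i2 := hf 2
    simp only [Matrix.cons_val] at i0 i1 i2
    have hfd : ∀ (w : ℝ → A) (w' : A) (x : ℝ), HasDerivAt w w' x →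
        HasDerivAt (fun x => f (w x)) (f w') x := fun w w' x h =>
      ((f.restrictScalars ℝ).hasFDerivAt (x := w x)).comp_hasDerivAt x h
    have hsm : ∀ (r : ℝ) (y : A), f (r • y) = r • f y := fun r y =>
      (f.restrictScalars ℝ).map_smul r y
    refine ⟨f, fun x => ode_unique 4 (8 * lam + 2) (2 * lam * (2 * lam + 1))
      (fun x => f (WW H u x)) (fun x => f (WW H (NH H u) x)) (fun x => f (WW H (NH H (NH H u)) x))
      (fun x => ((κ * FF lam (Ph lam k.val) x : ℝ) : ℂ))
      (fun x => ((κ * - FF lam (NN lam (Ph lam k.val)) x : ℝ) : ℂ))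
      (fun x => ((κ * FF lam (NN lam (NN lam (Ph lam k.val))) x : ℝ) : ℂ))
      ?_ ?_ ?_ ?_ ?_ ?_ x0 i0 i1 i2 x⟩
    · exact fun x => hfd _ _ x (WW_deriv H hF x)
    · exact fun x => hfd _ _ x (WW_deriv H (hF.mulN H) x)
    · intro x
      refine (hfd _ _ x (WW_deriv H ((hF.mulN H).mulN H) x)).congr_deriv ?_
      rw [WW_ode hH u hF hr, hsm, map_add, map_add, hsm, hsm, hsm]
    · exact fun x => ((FF_deriv lam hg x).const_mul κ).ofReal_comp
    · intro x
      refine (((FF_deriv lam hg1 x).neg).const_mul κ).ofReal_comp.congr_deriv ?_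
      rw [neg_neg]
    · intro x
      refine ((FF_deriv lam hg2 x).const_mul κ).ofReal_comp.congr_deriv ?_
      rw [FF_ode hlam]
      simp only [Complex.real_smul]
      push_cast
      ring
  choose f hf using hsol
  refine ⟨LinearMap.pi fun k => (f k : A →ₗ[ℂ] ℂ), fun k M => ?_⟩
  obtain ⟨C, hC⟩ := Ph_asymp hlam k M
  refine ⟨C, 1, fun q hq => ?_⟩
  have hq0 : 0 < q := by linarith
  have hIq : I q = WW H u (Real.log q) := by
    rw [hI q hq0]
    unfold WW PP
    rw [Real.exp_log hq0, Complex.coe_smul]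
    congr 1
    refine tsum_congr fun n => ?_
    rw [← Complex.ofReal_pow, Complex.coe_smul]
  set t := Real.exp (-Real.log q / 2) with ht
  have htm : t ∈ Set.Icc (0:ℝ) 1 := by
    refine ⟨(Real.exp_pos _).le, Real.exp_le_one_iff.2 ?_⟩
    have := Real.log_nonneg hq
    linarith
  have hpow : ∀ m : ℕ, q ^ (-((m : ℝ) + (k.val : ℝ) / 2 + lam)) =
      Real.exp (-lam * Real.log q) * t ^ (2 * m + k.val) := by
    intro m
    rw [Real.rpow_def_of_pos hq0, ht, ← Real.exp_nat_mul, ← Real.exp_add]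
    congr 1
    push_cast
    ring
  have hcp : ∀ m : ℕ, (q : ℂ) ^ (-((m : ℂ) + (k.val : ℂ) / 2 + (lam : ℂ))) =
      ((Real.exp (-lam * Real.log q) * t ^ (2 * m + k.val) : ℝ) : ℂ) := by
    intro m
    rw [← hpow, Complex.ofReal_cpow hq0.le]
    push_cast
    rfl
  have hL : (LinearMap.pi fun k => (f k : A →ₗ[ℂ] ℂ)) (I q) k =
      (((gam lam k.val ^ 3)⁻¹ * FF lam (Ph lam k.val) (Real.log q) : ℝ) : ℂ) := by
    rw [hIq]
    exact hf k _
  rw [hL, hpow]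
  simp only [hcp]
  have hfin := hC t htm
  have hE := Real.exp_pos (-lam * Real.log q)
  have e : (((gam lam k.val ^ 3)⁻¹ * FF lam (Ph lam k.val) (Real.log q) : ℝ) : ℂ) -
      ∑ m ∈ Finset.range M,
          (((∏ l ∈ Finset.range m, (-lam - ((k.val : ℝ) / 2 + (l : ℝ))) ^ 3) /
              ((2 * m + k.val).factorial : ℝ) : ℝ) : ℂ) *
            ((Real.exp (-lam * Real.log q) * t ^ (2 * m + k.val) : ℝ) : ℂ) =
      ((Real.exp (-lam * Real.log q) * ((gam lam k.val ^ 3)⁻¹ * Ph lam k.val 0 t -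
        ∑ m ∈ Finset.range M,
      (∏ l ∈ Finset.range m, (-lam - ((k.val : ℝ) / 2 + (l : ℝ))) ^ 3) /
              ((2 * m + k.val).factorial : ℝ) * t ^ (2 * m + k.val)) : ℝ) : ℂ) := by
    simp only [← Complex.ofReal_mul]
    rw [← Complex.ofReal_sum, ← Complex.ofReal_sub]
    congr 1
    rw [mul_sub, Finset.mul_sum, FF, ← ht]
    congr 1
    · ring
    · exact Finset.sum_congr rfl fun m _ => by ring
  rw [e, Complex.norm_real, Real.norm_eq_abs, abs_mul, abs_of_pos hE]
  calc _ ≤ Real.exp (-lam * Real.log q) * (C * t ^ (2 * M + k.val)) := by gcongr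
    _ = _ := by ring
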